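/- Let A be a unital Banach algebra with identity 1 of norm 1. If a ∈ A satisfies ‖1 − t·a‖ ≤ 1 and ‖1 + s·a‖ ≤ 1 for some s, t > 0, then a = 0. Consequently the cone 𝔠_A = ℝ₊·{a : ‖1 − a‖ ≤ 1} is a proper cone, i.e. 𝔠_A ∩ (−𝔠_A) = {0}. -/

import Mathlib

/-- The cone `ℝ₊ • 𝔉_A` where `𝔉_A = {a : ‖1 - a‖ ≤ 1}`. -/
def cA (A : Type*) [NormedRing A] [NormedAlgebra ℝ A] : Set A :=
  {x : A | ∃ r : ℝ, 0 ≤ r ∧ ∃ b : A, ‖(1 : A) - b‖ ≤ 1 ∧ x = r • b}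

/-- Weighted first absolute moment bound for the binomial distribution. -/
theorem binom_abs_moment (N : ℕ) :
    (∑ k ∈ Finset.range (N + 1), |(2 * k - N : ℝ)| * (N.choose k : ℝ)) ^ 2
      ≤ 2 ^ N * (N * 2 ^ N) := by
  have h1 : ∑ k ∈ Finset.range (N + 1), (N.choose k : ℝ) = 2 ^ N := by
    exact_mod_cast Nat.sum_range_choose N
  have h2 : ∑ k ∈ Finset.range (N + 1), (2 * k - N : ℝ) ^ 2 * (N.choose k : ℝ) = N * 2 ^ N := by
    have h := congrArg (Polynomial.eval (1 / 2 : ℝ)) (bernsteinPolynomial.variance ℝ N)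
    simp only [Polynomial.eval_finset_sum, bernsteinPolynomial, Polynomial.eval_mul,
      Polynomial.eval_pow, Polynomial.eval_sub, Polynomial.eval_smul, Polynomial.eval_X,
      Polynomial.eval_natCast, Polynomial.eval_one, nsmul_eq_mul] at h
    have h' : ∑ k ∈ Finset.range (N + 1), (2 * k - N : ℝ) ^ 2 * (N.choose k : ℝ)
        = (4 * 2 ^ N) * ((N : ℝ) * (1 / 2) * (1 - 1 / 2)) := by
      rw [← h, Finset.mul_sum]
      refine Finset.sum_congr rfl fun k hk => ?_
      have hk' : k ≤ N := Nat.lt_succ_iff.mp (Finset.mem_range.mp hk)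
      have e : (2 : ℝ) ^ N * ((1 / 2) ^ k * (1 / 2) ^ (N - k)) = 1 := by
        rw [← pow_add, Nat.add_sub_cancel' hk', ← mul_pow]; norm_num
      have e2 : (1 - 1 / 2 : ℝ) = 1 / 2 := by norm_num
      rw [e2]
      linear_combination (-(2 * k - N : ℝ) ^ 2 * (N.choose k : ℝ)) * e
    rw [h']; ring
  rw [← h2, ← h1]
  apply Finset.sum_sq_le_sum_mul_sum_of_sq_eq_mul
  · intros; positivity
  · intros; positivity
  · intro k _
    rw [mul_pow, sq_abs]; ring

theorem binom_identity {A : Type*} [NormedRing A] [NormedAlgebra ℝ A] (u : A) (n : ℕ) :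
    ((n + 1 : ℕ) : ℝ) • ((u + 1) ^ n * (u - 1)) =
      ∑ k ∈ Finset.range (n + 1 + 1),
        ((2 * k - (n + 1 : ℕ) : ℝ) * ((n + 1).choose k : ℝ)) • u ^ k := by
  have hP : ∀ m : ℕ, (u + 1) ^ m = ∑ k ∈ Finset.range (m + 1), (m.choose k : ℝ) • u ^ k := by
    intro m
    rw [(Commute.one_right u).add_pow]
    refine Finset.sum_congr rfl fun k _ => ?_
    rw [one_pow, mul_one, ← nsmul_eq_mul', Nat.cast_smul_eq_nsmul]
  have hD : ∑ k ∈ Finset.range (n + 1 + 1), ((k : ℝ) * ((n + 1).choose k : ℝ)) • u ^ k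
      = ((n + 1 : ℕ) : ℝ) • ((u + 1) ^ n * u) := by
    rw [Finset.sum_range_succ', hP n, Finset.sum_mul, Finset.smul_sum]
    simp only [Nat.cast_zero, zero_mul, zero_smul, add_zero]
    refine Finset.sum_congr rfl fun k _ => ?_
    rw [smul_mul_assoc, ← pow_succ, smul_smul]
    congr 1
    have := Nat.add_one_mul_choose_eq n k
    have h : (((n + 1) * n.choose k : ℕ) : ℝ) = (((n + 1).choose (k + 1) * (k + 1) : ℕ) : ℝ) := by
      rw [this]
    push_cast at h ⊢
    linarith
  have : ∑ k ∈ Finset.range (n + 1 + 1),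
        ((2 * k - (n + 1 : ℕ) : ℝ) * ((n + 1).choose k : ℝ)) • u ^ k
      = (2 : ℝ) • (((n + 1 : ℕ) : ℝ) • ((u + 1) ^ n * u))
        - ((n + 1 : ℕ) : ℝ) • (u + 1) ^ (n + 1) := by
    rw [← hD, hP (n + 1), Finset.smul_sum, Finset.smul_sum, ← Finset.sum_sub_distrib]
    refine Finset.sum_congr rfl fun k _ => ?_
    rw [smul_smul, smul_smul, ← sub_smul]
    congr 1; ring
  rw [this, smul_comm, ← smul_sub]
  congr 1
  rw [pow_succ, mul_add, mul_sub, two_smul]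
  abel

/-- The identity is an extreme point of the unit ball. -/
theorem one_extreme {A : Type*} [NormedRing A] [NormOneClass A] [NormedAlgebra ℝ A] (x : A)
    (h1 : ‖1 + x‖ ≤ 1) (h2 : ‖1 - x‖ ≤ 1) : x = 0 := by
  set u := 1 + x with hu
  have hexp : ∀ z : A, 2 * ‖z‖ ≤ ‖(u + 1) * z‖ := by
    intro z
    have e : (3 : ℝ) • z = (u + 1) * z + (1 - x) * z := by
      rw [← add_mul, show u + 1 + (1 - x) = (1 + 1 + 1 : A) by rw [hu]; abel,
        show (3 : ℝ) = 1 + 1 + 1 by norm_num]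
      simp only [add_smul, add_mul, one_smul, one_mul]
    have h3 : ‖(3 : ℝ) • z‖ = 3 * ‖z‖ := by rw [norm_smul]; norm_num
    have h4 := norm_add_le ((u + 1) * z) ((1 - x) * z)
    rw [← e, h3] at h4
    have h5 : ‖(1 - x) * z‖ ≤ ‖z‖ :=
      (norm_mul_le _ _).trans (mul_le_of_le_one_left (norm_nonneg _) h2)
    linarith
  have hexpn : ∀ n : ℕ, 2 ^ n * ‖x‖ ≤ ‖(u + 1) ^ n * x‖ := by
    intro n
    induction n with
    | zero => simp
    | succ n ih =>
      rw [pow_succ' (u + 1), mul_assoc, pow_succ]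
      linarith [hexp ((u + 1) ^ n * x)]
  have hx : u - 1 = x := by rw [hu]; abel
  have key : ∀ n : ℕ, ((n + 1 : ℕ) : ℝ) * ‖x‖ ^ 2 ≤ 4 := by
    intro n
    have hid := congrArg norm (binom_identity u n)
    rw [hx, norm_smul, Real.norm_natCast] at hid
    have hle : ((n + 1 : ℕ) : ℝ) * ‖(u + 1) ^ n * x‖ ≤ ∑ k ∈ Finset.range (n + 1 + 1),
        |(2 * k - (n + 1 : ℕ) : ℝ)| * ((n + 1).choose k : ℝ) := by
      rw [hid]
      refine norm_sum_le_of_le _ fun k _ => ?_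
      rw [norm_smul, norm_mul, Real.norm_natCast, Real.norm_eq_abs]
      refine mul_le_of_le_one_right (by positivity) ?_
      exact (norm_pow_le u k).trans (pow_le_one₀ (norm_nonneg _) h1)
    have h3 : ((n + 1 : ℕ) : ℝ) * (2 ^ n * ‖x‖) ≤ _ :=
      (mul_le_mul_of_nonneg_left (hexpn n) (by positivity)).trans hle
    have h4 := (pow_le_pow_left₀ (by positivity) h3 2).trans (binom_abs_moment (n + 1))
    have hpos : (0 : ℝ) < ((n + 1 : ℕ) : ℝ) * (2 ^ n) ^ 2 := by positivity
    refine le_of_mul_le_mul_left ?_ hpos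
    calc _ = (((n + 1 : ℕ) : ℝ) * (2 ^ n * ‖x‖)) ^ 2 := by ring
      _ ≤ _ := h4
      _ = _ := by ring
  by_contra hne
  have hp : 0 < ‖x‖ ^ 2 := by have := norm_pos_iff.mpr hne; positivity
  obtain ⟨n, hn⟩ := exists_nat_gt (4 / ‖x‖ ^ 2)
  rw [div_lt_iff₀ hp] at hn
  have := key n
  push_cast at this
  nlinarith

theorem shrink {A : Type*} [NormedRing A] [NormOneClass A] [NormedAlgebra ℝ A] (a : A)
    (s m : ℝ) (hm : 0 < m) (hms : m ≤ s) (h : ‖1 + s • a‖ ≤ 1) : ‖1 + m • a‖ ≤ 1 := by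
  have hs : 0 < s := hm.trans_le hms
  have e : 1 + m • a = (1 - m / s) • (1 : A) + (m / s) • (1 + s • a) := by
    rw [smul_add, smul_smul, div_mul_cancel₀ _ hs.ne', sub_smul, one_smul]; abel
  have h1 : 0 ≤ 1 - m / s := by rw [sub_nonneg, div_le_one hs]; exact hms
  have h2 : 0 ≤ m / s := by positivity
  rw [e]
  refine (norm_add_le _ _).trans ?_
  rw [norm_smul, norm_smul, norm_one, Real.norm_of_nonneg h1, Real.norm_of_nonneg h2]
  nlinarith

/-- In a unital Banach algebra with identity of norm one, if `‖1 - t•a‖ ≤ 1` and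
`‖1 + s•a‖ ≤ 1` for some `s, t > 0`, then `a = 0`; consequently `𝔠_A` is a proper cone. -/
theorem stmt0 (A : Type*) [NormedRing A] [CompleteSpace A] [NormOneClass A]
    [NormedAlgebra ℝ A] :
    (∀ (a : A) (s t : ℝ), 0 < s → 0 < t →
      ‖(1 : A) - t • a‖ ≤ 1 → ‖(1 : A) + s • a‖ ≤ 1 → a = 0) ∧
    cA A ∩ {x : A | -x ∈ cA A} = {0} := by
  have main : ∀ (a : A) (s t : ℝ), 0 < s → 0 < t →
      ‖(1 : A) - t • a‖ ≤ 1 → ‖(1 : A) + s • a‖ ≤ 1 → a = 0 := by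
    intro a s t hs ht h1 h2
    have hm : 0 < min s t := lt_min hs ht
    have e1 := shrink a s _ hm (min_le_left _ _) h2
    have e2 := shrink (-a) t _ hm (min_le_right _ _) (by rwa [smul_neg, ← sub_eq_add_neg])
    rw [smul_neg, ← sub_eq_add_neg] at e2
    exact (smul_eq_zero.mp (one_extreme _ e1 e2)).resolve_left hm.ne'
  refine ⟨main, ?_⟩
  ext x
  simp only [Set.mem_inter_iff, Set.mem_setOf_eq, Set.mem_singleton_iff]
  constructor
  · rintro ⟨⟨r, hr, b, hb, hx⟩, ⟨r', hr', b', hb', hx'⟩⟩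
    rcases hr.eq_or_lt with h | h
    · rw [hx, ← h, zero_smul]
    rcases hr'.eq_or_lt with h' | h'
    · rw [← neg_eq_zero, hx', ← h', zero_smul]
    refine main x r'⁻¹ r⁻¹ (inv_pos.mpr h') (inv_pos.mpr h) ?_ ?_
    · rwa [hx, smul_smul, inv_mul_cancel₀ h.ne', one_smul]
    · rw [← neg_neg x, hx', smul_neg, smul_smul, inv_mul_cancel₀ h'.ne', one_smul,
        ← sub_eq_add_neg]
      exact hb'
  · rintro rfl
    have h0 : (0 : A) ∈ cA A := ⟨0, le_rfl, 1, by simp, by simp⟩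
    exact ⟨h0, by simpa using h0⟩
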